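/- arXiv:1205.7018 — 2 statements merged into one kernel-verified Lean document; each statement's English description precedes it below -/
import Mathlib

section
/- Let 0 < ε < ε₁. Then there exists δ ∈ (0, 1/2], depending only on the ratio ε/ε₁, such that for every bounded nondegenerate interval I ⊆ ℝ and every φ ∈ BMO_ε(I) there is a partition of I into two adjacent subintervals I₋ and I₊ (with I = I₋ ∪ I₊ and disjoint interiors) satisfying δ ≤ |I₋|/|I| ≤ 1 − δ, such that the straight-line segment with endpoints x⁻ = (⟨φ⟩_{I₋}, ⟨φ²⟩_{I₋}) and x⁺ = (⟨φ⟩_{I₊}, ⟨φ²⟩_{I₊}) lies entirely inside the parabolic strip Ω_{ε₁}. -/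
open MeasureTheory Set Real

/-- The average of `φ` over the interval with endpoints `a`, `b`. -/
noncomputable def intAvg (φ : ℝ → ℝ) (a b : ℝ) : ℝ := (∫ t in a..b, φ t) / (b - a)

/-- `φ` belongs to the ball of radius `ε` of (quadratic-norm) BMO on the interval `(l, r)`. -/
def memBMOe (ε l r : ℝ) (φ : ℝ → ℝ) : Prop :=
  IntegrableOn φ (Ioo l r) ∧
  IntegrableOn (fun t => (φ t) ^ 2) (Ioo l r) ∧
  ∀ c d : ℝ, l ≤ c → c < d → d ≤ r →
    intAvg (fun t => (φ t) ^ 2) c d - (intAvg φ c d) ^ 2 ≤ ε ^ 2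

/-- The parabolic strip `Ω_ε`. -/
def parabStrip (ε : ℝ) : Set (ℝ × ℝ) := {x | x.1 ^ 2 ≤ x.2 ∧ x.2 ≤ x.1 ^ 2 + ε ^ 2}

/-! Let `x`, `x⁻`, `x⁺` be the points of averages over `I`, `I₋`, `I₊`, so that `x` divides the
segment `[x⁻, x⁺]` in the ratio of the lengths. If bisecting `I` does not work, then one of the two
segments from `x`, say `[x⁻, x]`, leaves the strip `Ω_{ε₁}`. Move the splitting point towards the
far end of `I₊`: the point `x⁻` tends to `x`, so at some moment the segment `[x⁻, x]` touches the
upper boundary of the strip. The whole line through `x⁻` and `x` is then tangent to that boundary,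
hence `[x⁻, x⁺]` lies below it. A segment touching the upper boundary of `Ω_{ε₁}` with endpoints in
`Ω_ε` cannot be short, while `x⁻` is close to `x` if `|I₊|` is small; this bounds `|I₊| / |I|` from
below by `1 - (ε / ε₁) ^ 2`. -/

lemma segment_subset_union {𝕜 V : Type*} [Field 𝕜] [LinearOrder 𝕜] [IsStrictOrderedRing 𝕜]
    [AddCommGroup V] [Module 𝕜 V] (x y : V) {z : V} (hz : z ∈ segment 𝕜 x y) :
    segment 𝕜 x y ⊆ segment 𝕜 x z ∪ segment 𝕜 z y := by
  have hz' : z ∈ range (AffineMap.lineMap x y : 𝕜 → V) := by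
    rw [segment_eq_image_lineMap] at hz
    exact image_subset_range _ _ hz
  rw [← insert_endpoints_openSegment 𝕜 x y, insert_subset_iff, insert_subset_iff]
  refine ⟨Or.inl (left_mem_segment 𝕜 x z), Or.inr (right_mem_segment 𝕜 z y),
    (openSegment_subset_union x y hz').trans (insert_subset_iff.2 ⟨?_, ?_⟩)⟩
  · exact Or.inl (right_mem_segment 𝕜 x z)
  · exact union_subset_union (openSegment_subset_segment ..) (openSegment_subset_segment ..)

section Parabola

open AffineMap

/-- The vertical distance from `x` to the parabola `x₂ = x₁²`; at a point of averages this is the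
variance. It is negative below the parabola. -/
def parabDefect (x : ℝ × ℝ) : ℝ := x.2 - x.1 ^ 2

/-- The horizontal distance from `x` to the tangency points of the two lines through `x` that are
tangent to the parabola `x₂ = x₁² + E²`; it is `0` by convention if `x` lies above that parabola. -/
noncomputable def tangentDist (E : ℝ) (x : ℝ × ℝ) : ℝ := √(E ^ 2 - parabDefect x)

variable {E ε s : ℝ} {p q x : ℝ × ℝ}

lemma mem_parabStrip_iff : x ∈ parabStrip E ↔ parabDefect x ∈ Icc 0 (E ^ 2) := by
  simp only [parabStrip, mem_ofPred_eq, parabDefect, mem_Icc, sub_nonneg, sub_le_iff_le_add']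

lemma parabStrip_subset (h : ε ^ 2 ≤ E ^ 2) : parabStrip ε ⊆ parabStrip E :=
  fun _ hx => ⟨hx.1, hx.2.trans (by gcongr)⟩

lemma continuous_tangentDist (E : ℝ) : Continuous (tangentDist E) := by
  unfold tangentDist parabDefect
  fun_prop

lemma tangentDist_nonneg (E : ℝ) (x : ℝ × ℝ) : 0 ≤ tangentDist E x := sqrt_nonneg _

lemma tangentDist_pos (hx : parabDefect x < E ^ 2) : 0 < tangentDist E x :=
  sqrt_pos.2 (sub_pos.2 hx)

lemma tangentDist_sq (hx : parabDefect x ≤ E ^ 2) :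
    tangentDist E x ^ 2 = E ^ 2 - parabDefect x :=
  sq_sqrt (sub_nonneg.2 hx)

lemma parabDefect_lineMap (p q : ℝ × ℝ) (t : ℝ) :
    parabDefect (lineMap p q t) =
      (1 - t) * parabDefect p + t * parabDefect q + t * (1 - t) * (p.1 - q.1) ^ 2 := by
  simp only [parabDefect, fst_lineMap, snd_lineMap, lineMap_apply_ring]
  ring

lemma parabDefect_lineMap_nonneg (hp : 0 ≤ parabDefect p) (hq : 0 ≤ parabDefect q) {t : ℝ}
    (ht : t ∈ Icc (0 : ℝ) 1) : 0 ≤ parabDefect (lineMap p q t) := by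
  have := sub_nonneg.2 ht.2
  have := ht.1
  rw [parabDefect_lineMap]
  positivity

/-- If `|p₁ - q₁|` is the sum of the two tangent distances, then `p` and `q` see the same tangency
point from opposite sides, so this equality encodes tangency of the line `pq` to `x₂ = x₁² + E²`. -/
lemma parabDefect_lineMap_eq_sub_sq (hp : parabDefect p ≤ E ^ 2) (hq : parabDefect q ≤ E ^ 2)
    (t : ℝ) :
    parabDefect (lineMap p q t) =
      E ^ 2 - ((1 - t) * tangentDist E p - t * tangentDist E q) ^ 2 +
        t * (1 - t) * ((p.1 - q.1) ^ 2 - (tangentDist E p + tangentDist E q) ^ 2) := by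
  rw [parabDefect_lineMap]
  linear_combination (1 - t) * tangentDist_sq hp + t * tangentDist_sq hq

lemma segment_subset_parabStrip (hp : 0 ≤ parabDefect p) (hq : 0 ≤ parabDefect q)
    (hle : ∀ t ∈ Icc (0 : ℝ) 1, parabDefect (lineMap p q t) ≤ E ^ 2) :
    segment ℝ p q ⊆ parabStrip E := by
  rw [segment_eq_image_lineMap]
  rintro _ ⟨t, ht, rfl⟩
  exact mem_parabStrip_iff.2 ⟨parabDefect_lineMap_nonneg hp hq ht, hle t ht⟩

lemma segment_subset_parabStrip_of_abs_sub_le (hp : p ∈ parabStrip E) (hq : q ∈ parabStrip E)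
    (hpq : |p.1 - q.1| ≤ tangentDist E p + tangentDist E q) :
    segment ℝ p q ⊆ parabStrip E := by
  rw [mem_parabStrip_iff] at hp hq
  refine segment_subset_parabStrip hp.1 hq.1 fun t ht => ?_
  have hdist : (p.1 - q.1) ^ 2 ≤ (tangentDist E p + tangentDist E q) ^ 2 :=
    sq_le_sq.2 (hpq.trans (le_abs_self _))
  rw [parabDefect_lineMap_eq_sub_sq hp.2 hq.2]
  have := mul_nonneg (mul_nonneg ht.1 (sub_nonneg.2 ht.2)) (sub_nonneg.2 hdist)
  linarith [sq_nonneg ((1 - t) * tangentDist E p - t * tangentDist E q)]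

lemma parabDefect_lineMap_le_of_tangent (hp : parabDefect p ≤ E ^ 2) (hq : parabDefect q ≤ E ^ 2)
    (hpq : |p.1 - q.1| = tangentDist E p + tangentDist E q) (t : ℝ) :
    parabDefect (lineMap p q t) ≤ E ^ 2 := by
  rw [parabDefect_lineMap_eq_sub_sq hp hq, ← hpq, sq_abs, sub_self, mul_zero, add_zero]
  exact sub_le_self _ (sq_nonneg _)

lemma segment_subset_parabStrip_of_tangent (hp : p ∈ parabStrip E) (hq : 0 ≤ parabDefect q)
    (hs : s ≠ 0) (hx : parabDefect (lineMap p q s) ≤ E ^ 2)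
    (htan : |p.1 - (lineMap p q s).1| = tangentDist E p + tangentDist E (lineMap p q s)) :
    segment ℝ p q ⊆ parabStrip E := by
  rw [mem_parabStrip_iff] at hp
  refine segment_subset_parabStrip hp.1 hq fun t _ => ?_
  have hline : lineMap p q t = lineMap p (lineMap p q s) (t / s) := by
    rw [lineMap_lineMap_right, div_mul_cancel₀ t hs]
  rw [hline]
  exact parabDefect_lineMap_le_of_tangent hp.2 hx htan _

lemma one_sub_sq_le_of_tangent (hεE : ε ^ 2 < E ^ 2) (hp : p ∈ parabStrip ε)
    (hq : 0 ≤ parabDefect q) (hs : s ∈ Icc (0 : ℝ) 1) (hx : parabDefect (lineMap p q s) ≤ ε ^ 2)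
    (htan : |p.1 - (lineMap p q s).1| = tangentDist E p + tangentDist E (lineMap p q s)) :
    1 - (ε / E) ^ 2 ≤ s := by
  rw [mem_parabStrip_iff] at hp
  have hE : 0 < E ^ 2 := (sq_nonneg ε).trans_lt hεE
  have hs' := sub_nonneg.2 hs.2
  have hfar : E ^ 2 - ε ^ 2 ≤ s ^ 2 * (p.1 - q.1) ^ 2 := calc
    E ^ 2 - ε ^ 2 ≤ tangentDist E p ^ 2 := by
      rw [tangentDist_sq (hp.2.trans hεE.le)]
      linarith [hp.2]
    _ ≤ |p.1 - (lineMap p q s).1| ^ 2 := by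
      rw [htan]
      gcongr
      · exact tangentDist_nonneg _ _
      · exact le_add_of_nonneg_right (tangentDist_nonneg _ _)
    _ = s ^ 2 * (p.1 - q.1) ^ 2 := by
      rw [sq_abs, fst_lineMap, lineMap_apply_ring]
      ring
  have hnear : s * (1 - s) * (p.1 - q.1) ^ 2 ≤ ε ^ 2 := by
    rw [parabDefect_lineMap] at hx
    linarith [mul_nonneg hs' hp.1, mul_nonneg hs.1 hq]
  have hbound : E ^ 2 - ε ^ 2 ≤ s * E ^ 2 := by
    linarith [mul_le_mul_of_nonneg_left hfar hs', mul_le_mul_of_nonneg_left hnear hs.1]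
  rw [div_pow, one_sub_div hE.ne', div_le_iff₀ hE]
  exact hbound

lemma exists_tangent_of_not_segment_subset {γ : ℝ → ℝ × ℝ} {a b : ℝ} (hab : a ≤ b)
    (hγ : ContinuousOn γ (Icc a b)) (ha : parabDefect (γ a) ∈ Ico 0 (E ^ 2))
    (hb : γ b ∈ parabStrip E) (hbad : ¬ segment ℝ (γ b) (γ a) ⊆ parabStrip E) :
    ∃ c ∈ Ioc a b, |(γ c).1 - (γ a).1| = tangentDist E (γ c) + tangentDist E (γ a) := by
  let excess : ℝ → ℝ := fun c =>
    |(γ c).1 - (γ a).1| - (tangentDist E (γ c) + tangentDist E (γ a))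
  have hcont : ContinuousOn excess (Icc a b) :=
    (hγ.fst.sub continuousOn_const).abs.sub
      (((continuous_tangentDist E).comp_continuousOn hγ).add continuousOn_const)
  have hstart : excess a < 0 := by
    simp only [excess, sub_self, abs_zero]
    linarith [tangentDist_pos ha.2]
  have hend : 0 ≤ excess b := by
    contrapose! hbad
    exact segment_subset_parabStrip_of_abs_sub_le hb
      (mem_parabStrip_iff.2 (Ico_subset_Icc_self ha)) (sub_neg.1 hbad).le
  obtain ⟨c, hc, hzero⟩ := intermediate_value_Ioc hab hcont ⟨hstart, hend⟩
  exact ⟨c, hc, sub_eq_zero.1 hzero⟩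

end Parabola

section Averages

open AffineMap

variable {f φ : ℝ → ℝ} {a b : ℝ}

/-- The Bellman point `(⟨φ⟩, ⟨φ²⟩)` of the interval with endpoints `a` and `b`, in either order. -/
noncomputable def avgPoint (φ : ℝ → ℝ) (a b : ℝ) : ℝ × ℝ :=
  (intAvg φ a b, intAvg (fun t => φ t ^ 2) a b)

lemma intAvg_eq_average (f : ℝ → ℝ) (a b : ℝ) : intAvg f a b = ⨍ t in a..b, f t :=
  (interval_average_eq_div f a b).symm

lemma intAvg_comm (f : ℝ → ℝ) (a b : ℝ) : intAvg f a b = intAvg f b a := by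
  rw [intAvg_eq_average, intAvg_eq_average, interval_average_symm]

lemma avgPoint_comm (φ : ℝ → ℝ) (a b : ℝ) : avgPoint φ a b = avgPoint φ b a := by
  rw [avgPoint, avgPoint, intAvg_comm φ, intAvg_comm (fun t => φ t ^ 2)]

lemma sub_mul_intAvg (f : ℝ → ℝ) (a b : ℝ) : (b - a) * intAvg f a b = ∫ t in a..b, f t := by
  rcases eq_or_ne a b with rfl | hab
  · simp
  · exact mul_div_cancel₀ _ (sub_ne_zero.2 hab.symm)

lemma intervalIntegrable_of_integrableOn_Ioo {l r c d : ℝ} (hf : IntegrableOn f (Ioo l r))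
    (hc : c ∈ Icc l r) (hd : d ∈ Icc l r) : IntervalIntegrable f volume c d := by
  have hlr := hc.1.trans hc.2
  refine ((intervalIntegrable_iff_integrableOn_Ioo_of_le hlr).2 hf).mono_set ?_
  rw [uIcc_of_le hlr]
  exact uIcc_subset_Icc hc hd

lemma sq_intAvg_le_intAvg_sq (hab : a ≠ b) (h₁ : IntervalIntegrable φ volume a b)
    (h₂ : IntervalIntegrable (fun t => φ t ^ 2) volume a b) :
    intAvg φ a b ^ 2 ≤ intAvg (fun t => φ t ^ 2) a b := by
  rw [intAvg_eq_average, intAvg_eq_average]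
  refine even_two.convexOn_pow.map_set_average_le (continuousOn_pow 2) isClosed_univ ?_ ?_
    (by simp) h₁.def' h₂.def'
  · simpa [sub_eq_zero] using hab.symm
  · simp

lemma parabDefect_avgPoint_nonneg (hab : a ≠ b) (h₁ : IntervalIntegrable φ volume a b)
    (h₂ : IntervalIntegrable (fun t => φ t ^ 2) volume a b) : 0 ≤ parabDefect (avgPoint φ a b) :=
  sub_nonneg.2 (sq_intAvg_le_intAvg_sq hab h₁ h₂)

lemma intAvg_eq_lineMap (hab : a ≠ b) (s : ℝ)
    (ha : IntervalIntegrable f volume a (lineMap b a s))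
    (hb : IntervalIntegrable f volume (lineMap b a s) b) :
    intAvg f a b = lineMap (intAvg f a (lineMap b a s)) (intAvg f (lineMap b a s) b) s := by
  have hadd := intervalIntegral.integral_add_adjacent_intervals ha hb
  simp only [← sub_mul_intAvg] at hadd
  simp only [lineMap_apply_ring] at hadd ⊢
  refine mul_left_cancel₀ (sub_ne_zero.2 hab.symm) ?_
  linear_combination -hadd

lemma continuousOn_intAvg (hf : IntervalIntegrable f volume a b) :
    ContinuousOn (intAvg f a) (uIcc a b \ {a}) :=
  ((intervalIntegral.continuousOn_primitive_interval' hf left_mem_uIcc).mono sdiff_subset).div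
    (by fun_prop) fun _ hx => sub_ne_zero.2 hx.2

end Averages

namespace memBMOe

open AffineMap

variable {ε E l r a b c d s : ℝ} {φ : ℝ → ℝ}

lemma intervalIntegrable (hφ : memBMOe ε l r φ) (hc : c ∈ Icc l r) (hd : d ∈ Icc l r) :
    IntervalIntegrable φ volume c d :=
  intervalIntegrable_of_integrableOn_Ioo hφ.1 hc hd

lemma intervalIntegrable_sq (hφ : memBMOe ε l r φ) (hc : c ∈ Icc l r) (hd : d ∈ Icc l r) :
    IntervalIntegrable (fun t => φ t ^ 2) volume c d :=
  intervalIntegrable_of_integrableOn_Ioo hφ.2.1 hc hd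

lemma avgPoint_mem_parabStrip (hφ : memBMOe ε l r φ) (hc : c ∈ Icc l r) (hd : d ∈ Icc l r)
    (hcd : c ≠ d) : avgPoint φ c d ∈ parabStrip ε := by
  wlog hlt : c < d generalizing c d
  · rw [avgPoint_comm]
    exact this hd hc hcd.symm (hcd.symm.lt_of_le (not_lt.1 hlt))
  exact mem_parabStrip_iff.2 ⟨parabDefect_avgPoint_nonneg hcd (hφ.intervalIntegrable hc hd)
    (hφ.intervalIntegrable_sq hc hd), hφ.2.2 c d hc.1 hlt hd.2⟩

lemma avgPoint_eq_lineMap (hφ : memBMOe ε l r φ) (ha : a ∈ Icc l r) (hb : b ∈ Icc l r)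
    (hab : a ≠ b) (hs : s ∈ Icc (0 : ℝ) 1) :
    avgPoint φ a b =
      lineMap (avgPoint φ a (lineMap b a s)) (avgPoint φ (lineMap b a s) b) s := by
  have hm : lineMap b a s ∈ Icc l r := (convex_Icc l r).lineMap_mem hb ha hs
  refine Prod.ext ?_ ?_
  · rw [fst_lineMap]
    exact intAvg_eq_lineMap hab s (hφ.intervalIntegrable ha hm) (hφ.intervalIntegrable hm hb)
  · rw [snd_lineMap]
    exact intAvg_eq_lineMap hab s (hφ.intervalIntegrable_sq ha hm) (hφ.intervalIntegrable_sq hm hb)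

lemma avgPoint_lineMap_mem_parabStrip (hφ : memBMOe ε l r φ) (ha : a ∈ Icc l r) (hb : b ∈ Icc l r)
    (hab : a ≠ b) (hs : s ∈ Ico (0 : ℝ) 1) : avgPoint φ a (lineMap b a s) ∈ parabStrip ε := by
  refine hφ.avgPoint_mem_parabStrip ha
    ((convex_Icc l r).lineMap_mem hb ha (Ico_subset_Icc_self hs)) fun h => ?_
  exact (lineMap_eq_right_iff.1 h.symm).elim hab.symm hs.2.ne

lemma continuousOn_avgPoint_lineMap (hφ : memBMOe ε l r φ) (ha : a ∈ Icc l r) (hb : b ∈ Icc l r)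
    (hab : a ≠ b) : ContinuousOn (fun s : ℝ => avgPoint φ a (lineMap b a s)) (Ico 0 1) := by
  have hmaps : MapsTo (lineMap b a) (Ico (0 : ℝ) 1) (uIcc a b \ {a}) := fun s hs =>
    ⟨(convex_uIcc a b).lineMap_mem right_mem_uIcc left_mem_uIcc (Ico_subset_Icc_self hs),
      fun h => (lineMap_eq_right_iff.1 h).elim hab.symm hs.2.ne⟩
  have hline : ContinuousOn (lineMap b a : ℝ → ℝ) (Ico 0 1) := by fun_prop
  exact ((continuousOn_intAvg (hφ.intervalIntegrable ha hb)).comp hline hmaps).prodMk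
    ((continuousOn_intAvg (hφ.intervalIntegrable_sq ha hb)).comp hline hmaps)

lemma exists_tangent_avgPoint (hφ : memBMOe ε l r φ) (hεE : ε ^ 2 < E ^ 2)
    (ha : a ∈ Icc l r) (hb : b ∈ Icc l r) (hab : a ≠ b)
    (hbad : ¬ segment ℝ (avgPoint φ a (lineMap b a (1 / 2 : ℝ))) (avgPoint φ a b) ⊆ parabStrip E) :
    ∃ s ∈ Ioc (0 : ℝ) (1 / 2),
      |(avgPoint φ a (lineMap b a s)).1 - (avgPoint φ a b).1| =
        tangentDist E (avgPoint φ a (lineMap b a s)) + tangentDist E (avgPoint φ a b) := by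
  have hx := mem_parabStrip_iff.1 (hφ.avgPoint_mem_parabStrip ha hb hab)
  have hhalf : avgPoint φ a (lineMap b a (1 / 2 : ℝ)) ∈ parabStrip E :=
    parabStrip_subset hεE.le (hφ.avgPoint_lineMap_mem_parabStrip ha hb hab (by norm_num))
  have hcont : ContinuousOn (fun s : ℝ => avgPoint φ a (lineMap b a s)) (Icc 0 (1 / 2)) :=
    (hφ.continuousOn_avgPoint_lineMap ha hb hab).mono (Icc_subset_Ico_right (by norm_num))
  have htan := exists_tangent_of_not_segment_subset (E := E) (by norm_num) hcont
  simp only [lineMap_apply_zero] at htan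
  exact htan ⟨hx.1, hx.2.trans_lt hεE⟩ hhalf hbad

lemma exists_segment_subset_of_not_segment_subset (hφ : memBMOe ε l r φ)
    (hεE : ε ^ 2 < E ^ 2) (ha : a ∈ Icc l r) (hb : b ∈ Icc l r) (hab : a ≠ b)
    (hbad : ¬ segment ℝ (avgPoint φ a (lineMap b a (1 / 2 : ℝ))) (avgPoint φ a b) ⊆ parabStrip E) :
    ∃ s ∈ Icc (1 - (ε / E) ^ 2) (1 / 2),
      segment ℝ (avgPoint φ a (lineMap b a s)) (avgPoint φ (lineMap b a s) b) ⊆ parabStrip E := by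
  obtain ⟨s, hs, htan⟩ := hφ.exists_tangent_avgPoint hεE ha hb hab hbad
  have hs01 : s ∈ Ioo (0 : ℝ) 1 := ⟨hs.1, by linarith [hs.2]⟩
  have hleft : avgPoint φ a (lineMap b a s) ∈ parabStrip ε :=
    hφ.avgPoint_lineMap_mem_parabStrip ha hb hab (Ioo_subset_Ico_self hs01)
  have hright : avgPoint φ (lineMap b a s) b ∈ parabStrip ε := by
    rw [avgPoint_comm, ← lineMap_apply_one_sub]
    exact hφ.avgPoint_lineMap_mem_parabStrip hb ha hab.symm
      ⟨sub_nonneg.2 hs01.2.le, sub_lt_self 1 hs01.1⟩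
  have hright₀ := (mem_parabStrip_iff.1 hright).1
  have hx := (mem_parabStrip_iff.1 (hφ.avgPoint_mem_parabStrip ha hb hab)).2
  rw [hφ.avgPoint_eq_lineMap ha hb hab (Ioo_subset_Icc_self hs01)] at hx htan
  refine ⟨s, ⟨?_, hs.2⟩, ?_⟩
  · exact one_sub_sq_le_of_tangent hεE hleft hright₀ (Ioo_subset_Icc_self hs01) hx htan
  · exact segment_subset_parabStrip_of_tangent (parabStrip_subset hεE.le hleft) hright₀ hs.1.ne'
      (hx.trans hεE.le) htan

lemma exists_segment_subset_parabStrip (hφ : memBMOe ε l r φ) (hεE : ε ^ 2 < E ^ 2) (hlr : l < r) :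
    ∃ s ∈ Icc ((1 - (ε / E) ^ 2) / 2) (1 - (1 - (ε / E) ^ 2) / 2),
      segment ℝ (avgPoint φ l (lineMap l r s)) (avgPoint φ (lineMap l r s) r) ⊆ parabStrip E := by
  have hl := left_mem_Icc.2 hlr.le
  have hr := right_mem_Icc.2 hlr.le
  have hκ₀ : 0 ≤ (ε / E) ^ 2 := sq_nonneg _
  have hκ₁ : (ε / E) ^ 2 < 1 := by rwa [div_pow, div_lt_one ((sq_nonneg ε).trans_lt hεE)]
  have hmid : lineMap r l (1 / 2 : ℝ) = lineMap l r (1 / 2 : ℝ) := by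
    rw [← lineMap_apply_one_sub, sub_half]
  by_cases hleft :
      segment ℝ (avgPoint φ l (lineMap l r (1 / 2 : ℝ))) (avgPoint φ l r) ⊆ parabStrip E
  · by_cases hright :
        segment ℝ (avgPoint φ r (lineMap l r (1 / 2 : ℝ))) (avgPoint φ r l) ⊆ parabStrip E
    · refine ⟨1 / 2, ⟨by linarith, by linarith⟩, ?_⟩
      have hx := hφ.avgPoint_eq_lineMap hl hr hlr.ne (s := 1 / 2) (by norm_num)
      rw [hmid] at hx
      rw [segment_symm, avgPoint_comm φ r, avgPoint_comm φ r] at hright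
      refine (segment_subset_union _ _ ?_).trans (union_subset hleft hright)
      rw [hx, segment_eq_image_lineMap]
      exact mem_image_of_mem _ (by norm_num)
    · obtain ⟨s, hs, hseg⟩ :=
        hφ.exists_segment_subset_of_not_segment_subset hεE hr hl hlr.ne' hright
      refine ⟨s, ⟨by linarith [hs.1], by linarith [hs.2]⟩, ?_⟩
      rwa [segment_symm, avgPoint_comm φ l, avgPoint_comm φ _ r]
  · rw [← hmid] at hleft
    obtain ⟨s, hs, hseg⟩ :=
      hφ.exists_segment_subset_of_not_segment_subset hεE hl hr hlr.ne hleft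
    refine ⟨1 - s, ⟨by linarith [hs.2], by linarith [hs.1]⟩, ?_⟩
    rwa [lineMap_apply_one_sub]

end memBMOe

theorem stmt1 :
    ∃ δ : ℝ → ℝ, ∀ ε ε₁ : ℝ, 0 < ε → ε < ε₁ →
      δ (ε / ε₁) ∈ Ioc (0 : ℝ) (1 / 2) ∧
      ∀ l r : ℝ, l < r → ∀ φ : ℝ → ℝ, memBMOe ε l r φ →
        ∃ m : ℝ, l < m ∧ m < r ∧
          δ (ε / ε₁) ≤ (m - l) / (r - l) ∧ (m - l) / (r - l) ≤ 1 - δ (ε / ε₁) ∧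
          segment ℝ (intAvg φ l m, intAvg (fun t => (φ t) ^ 2) l m)
              (intAvg φ m r, intAvg (fun t => (φ t) ^ 2) m r) ⊆ parabStrip ε₁ := by
  refine ⟨fun κ => (1 - κ ^ 2) / 2, fun ε ε₁ hε hεε₁ => ?_⟩
  have hε₁ : 0 < ε₁ := hε.trans hεε₁
  have hsq : ε ^ 2 < ε₁ ^ 2 := pow_lt_pow_left₀ hεε₁ hε.le two_ne_zero
  have hκ₀ : 0 ≤ (ε / ε₁) ^ 2 := sq_nonneg _
  have hκ₁ : (ε / ε₁) ^ 2 < 1 := by rwa [div_pow, div_lt_one (by positivity)]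
  refine ⟨⟨by linarith, by linarith⟩, fun l r hlr φ hφ => ?_⟩
  obtain ⟨s, hs, hseg⟩ := hφ.exists_segment_subset_parabStrip hsq hlr
  have hratio : (AffineMap.lineMap l r s - l) / (r - l) = s := by
    have := sub_pos.2 hlr
    rw [AffineMap.lineMap_apply_ring']
    field_simp
    ring
  refine ⟨AffineMap.lineMap l r s, ?_, ?_, hs.1.trans_eq hratio.symm, hratio.trans_le hs.2, hseg⟩
  · exact (left_lt_lineMap_iff_lt (by linarith [hs.1])).2 hlr
  · exact (lineMap_lt_right_iff_lt (by linarith [hs.2])).2 hlr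
end

section
/- Let I ⊆ ℝ be a bounded nondegenerate interval and let φ : I → ℝ be measurable with φ and φ² integrable on I. For real numbers c < d let φ_{c,d} denote the truncation of φ: φ_{c,d}(t) = d if φ(t) > d, φ_{c,d}(t) = φ(t) if c ≤ φ(t) ≤ d, and φ_{c,d}(t) = c if φ(t) < c. Then for every subinterval J ⊆ I one has ⟨φ_{c,d}²⟩_J − (⟨φ_{c,d}⟩_J)² ≤ ⟨φ²⟩_J − (⟨φ⟩_J)². In particular, if φ ∈ BMO_ε(I) for some ε > 0, then φ_{c,d} ∈ BMO_ε(I). -/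
open MeasureTheory Set Real

/-!
The variance `⟨φ²⟩_J - ⟨φ⟩_J²` is the least mean square distance from `φ` to a constant.
Comparing `g ∘ φ` with the constant `g ⟨φ⟩_J` therefore shows that composition with a
`K`-Lipschitz map `g` increases the variance by a factor of at most `K²`, and truncation is
composition with a `1`-Lipschitz map.
-/

open ProbabilityTheory
open scoped NNReal ENNReal

section Lipschitz

variable {Ω : Type*} [MeasurableSpace Ω] {μ : Measure Ω}

theorem memLp_comp_of_lipschitzWith {E F : Type*} [NormedAddCommGroup E] [NormedAddCommGroup F]
    [IsFiniteMeasure μ] {p : ℝ≥0∞} {K : ℝ≥0} {g : E → F} {X : Ω → E}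
    (hg : LipschitzWith K g) (hX : MemLp X p μ) : MemLp (fun ω => g (X ω)) p μ := by
  have hg_sub : LipschitzWith K fun x => g x - g 0 := by
    simpa using hg.sub (LipschitzWith.const (g 0))
  have hgX_sub : MemLp (fun ω => g (X ω) - g 0) p μ := hg_sub.comp_memLp (sub_self _) hX
  simpa only [Pi.add_def, sub_add_cancel] using hgX_sub.add (memLp_const (g 0))

theorem variance_comp_le_of_lipschitzWith [IsProbabilityMeasure μ] {K : ℝ≥0} {g : ℝ → ℝ}
    {X : Ω → ℝ} (hg : LipschitzWith K g) (hX : MemLp X 2 μ) :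
    Var[fun ω => g (X ω); μ] ≤ K ^ 2 * Var[X; μ] := by
  have hgX : MemLp (fun ω => g (X ω)) 2 μ := memLp_comp_of_lipschitzWith hg hX
  have hgX_sub : MemLp (fun ω => g (X ω) - g μ[X]) 2 μ := hgX.sub (memLp_const _)
  have hX_sub : MemLp (fun ω => X ω - μ[X]) 2 μ := hX.sub (memLp_const _)
  have sq_sub_le (x y : ℝ) : (g x - g y) ^ 2 ≤ K ^ 2 * (x - y) ^ 2 := by
    rw [← mul_pow, sq_le_sq, abs_mul, NNReal.abs_eq]
    exact hg.dist_le_mul x y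
  calc Var[fun ω => g (X ω); μ]
      = Var[fun ω => g (X ω) - g μ[X]; μ] :=
        (variance_sub_const hgX.aestronglyMeasurable _).symm
    _ ≤ ∫ ω, (g (X ω) - g μ[X]) ^ 2 ∂μ :=
        variance_le_expectation_sq hgX_sub.aestronglyMeasurable
    _ ≤ ∫ ω, K ^ 2 * (X ω - μ[X]) ^ 2 ∂μ :=
        integral_mono hgX_sub.integrable_sq (hX_sub.integrable_sq.const_mul _)
          fun ω => sq_sub_le (X ω) μ[X]
    _ = K ^ 2 * Var[X; μ] := by
        rw [integral_const_mul, variance_eq_integral hX.aemeasurable]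

end Lipschitz

section Interval

variable {a b l r : ℝ} {φ : ℝ → ℝ}

theorem isProbabilityMeasure_cond_Ioc (hab : a < b) : IsProbabilityMeasure volume[|Ioc a b] :=
  cond_isProbabilityMeasure_of_finite (by simpa using hab) (by simp)

theorem intAvg_eq_integral_cond (hab : a ≤ b) (φ : ℝ → ℝ) :
    intAvg φ a b = ∫ t, φ t ∂volume[|Ioc a b] := by
  rw [intAvg, ← interval_average_eq_div, uIoc_of_le hab, average_eq',
    Measure.restrict_apply_univ, ProbabilityTheory.cond]

theorem intAvg_sq_sub_sq_intAvg_eq_variance (hab : a < b) (hφ : MemLp φ 2 volume[|Ioc a b]) :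
    intAvg (fun t => φ t ^ 2) a b - intAvg φ a b ^ 2 = Var[φ; volume[|Ioc a b]] := by
  have := isProbabilityMeasure_cond_Ioc hab
  rw [variance_eq_sub hφ, intAvg_eq_integral_cond hab.le, intAvg_eq_integral_cond hab.le]
  rfl

theorem memLp_cond_Ioc_of_memLp_Ioo {E : Type*} [NormedAddCommGroup E] {p : ℝ≥0∞} {f : ℝ → E}
    (hla : l ≤ a) (hab : a < b) (hbr : b ≤ r) (hf : MemLp f p (volume.restrict (Ioo l r))) :
    MemLp f p volume[|Ioc a b] := by
  have hf_Ioc : MemLp f p (volume.restrict (Ioc a b)) := by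
    rw [← restrict_Ioo_eq_restrict_Ioc]
    exact hf.mono_measure (Measure.restrict_mono_set _ (Ioo_subset_Ioo hla hbr))
  exact hf_Ioc.smul_measure (by simpa using hab)

theorem intAvg_sq_sub_sq_intAvg_comp_le_of_lipschitzWith {K : ℝ≥0} {g : ℝ → ℝ}
    (hg : LipschitzWith K g) (hφ : MemLp φ 2 (volume.restrict (Ioo l r)))
    (hla : l ≤ a) (hab : a < b) (hbr : b ≤ r) :
    intAvg (fun t => g (φ t) ^ 2) a b - intAvg (fun t => g (φ t)) a b ^ 2 ≤
      K ^ 2 * (intAvg (fun t => φ t ^ 2) a b - intAvg φ a b ^ 2) := by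
  have := isProbabilityMeasure_cond_Ioc hab
  have hφ_cond : MemLp φ 2 volume[|Ioc a b] := memLp_cond_Ioc_of_memLp_Ioo hla hab hbr hφ
  rw [intAvg_sq_sub_sq_intAvg_eq_variance hab hφ_cond,
    intAvg_sq_sub_sq_intAvg_eq_variance hab (memLp_comp_of_lipschitzWith hg hφ_cond)]
  exact variance_comp_le_of_lipschitzWith hg hφ_cond

theorem memBMOe_comp_of_lipschitzWith {K : ℝ≥0} {g : ℝ → ℝ} {ε : ℝ} (hg : LipschitzWith K g)
    (hφ : memBMOe ε l r φ) : memBMOe (K * ε) l r fun t => g (φ t) := by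
  obtain ⟨hφ_int, hφ_sq, hφ_var⟩ := hφ
  have hφ_L2 : MemLp φ 2 (volume.restrict (Ioo l r)) :=
    (memLp_two_iff_integrable_sq hφ_int.aestronglyMeasurable).2 hφ_sq
  have hgφ_L2 := memLp_comp_of_lipschitzWith hg hφ_L2
  refine ⟨hgφ_L2.integrable one_le_two, hgφ_L2.integrable_sq, fun a b hla hab hbr => ?_⟩
  calc intAvg (fun t => g (φ t) ^ 2) a b - intAvg (fun t => g (φ t)) a b ^ 2
      ≤ K ^ 2 * (intAvg (fun t => φ t ^ 2) a b - intAvg φ a b ^ 2) :=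
        intAvg_sq_sub_sq_intAvg_comp_le_of_lipschitzWith hg hφ_L2 hla hab hbr
    _ ≤ K ^ 2 * ε ^ 2 := by gcongr; exact hφ_var a b hla hab hbr
    _ = (K * ε) ^ 2 := (mul_pow _ _ _).symm

end Interval

theorem lipschitzWith_max_min (c d : ℝ) : LipschitzWith 1 fun x => max c (min d x) :=
  (LipschitzWith.id.const_min d).const_max c

theorem stmt2_general (l r : ℝ) (φ : ℝ → ℝ) (h1 : IntegrableOn φ (Ioo l r))
    (h2 : IntegrableOn (fun t => (φ t) ^ 2) (Ioo l r)) {K : ℝ≥0} {g : ℝ → ℝ}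
    (hg : LipschitzWith K g) :
    (∀ a b : ℝ, l ≤ a → a < b → b ≤ r →
        intAvg (fun t => g (φ t) ^ 2) a b - intAvg (fun t => g (φ t)) a b ^ 2 ≤
          K ^ 2 * (intAvg (fun t => φ t ^ 2) a b - intAvg φ a b ^ 2)) ∧
    (∀ ε : ℝ, memBMOe ε l r φ → memBMOe (K * ε) l r fun t => g (φ t)) := by
  have hφ : MemLp φ 2 (volume.restrict (Ioo l r)) :=
    (memLp_two_iff_integrable_sq h1.aestronglyMeasurable).2 h2
  exact ⟨fun _ _ => intAvg_sq_sub_sq_intAvg_comp_le_of_lipschitzWith hg hφ,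
    fun _ => memBMOe_comp_of_lipschitzWith hg⟩

theorem stmt2 (l r : ℝ) (hlr : l < r) (φ : ℝ → ℝ)
    (hmeas : Measurable φ)
    (h1 : IntegrableOn φ (Ioo l r))
    (h2 : IntegrableOn (fun t => (φ t) ^ 2) (Ioo l r))
    (c d : ℝ) (hcd : c < d) :
    (∀ a b : ℝ, l ≤ a → a < b → b ≤ r →
        intAvg (fun t => (max c (min d (φ t))) ^ 2) a b -
            (intAvg (fun t => max c (min d (φ t))) a b) ^ 2 ≤
          intAvg (fun t => (φ t) ^ 2) a b - (intAvg φ a b) ^ 2) ∧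
    (∀ ε : ℝ, 0 < ε → memBMOe ε l r φ →
        memBMOe ε l r (fun t => max c (min d (φ t)))) := by
  have general := stmt2_general l r φ h1 h2 (lipschitzWith_max_min c d)
  simp only [NNReal.coe_one, one_pow, one_mul] at general
  exact ⟨general.1, fun ε _ => general.2 ε⟩
end
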